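/- Let k = ℚ(t) with the derivation t′ = 1. Every differential field extension (M,′) of (k,′) containing two distinct elements σ₁ ≠ σ₂ with σ₁′ = σ₁² − t and σ₂′ = σ₂² − t has transcendence degree at least 2 over k. -/

import Mathlib

open scoped TensorProduct

/-- A derivation on a (possibly noncommutative) ring: an additive map satisfying the
Leibniz rule. -/
structure IsRingDeriv {A : Type*} [Ring A] (d : A → A) : Prop where
  map_add : ∀ x y, d (x + y) = d x + d y
  leibniz : ∀ x y, d (x * y) = d x * y + x * d y

/-- The derivation `d` on the `k`-algebra `A` restricts to the derivation `δ` on `k`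
(along `algebraMap k A`). -/
def RestrictsTo {k A : Type*} [CommRing k] [Ring A] [Algebra k A]
    (δ : k → k) (d : A → A) : Prop :=
  ∀ c : k, d (algebraMap k A c) = algebraMap k A (δ c)

/-- The transcendence degree of `L` over `k` is at least `n`: there are `n` algebraically
independent elements. -/
def TrdegGE (k L : Type*) [CommRing k] [CommRing L] [Algebra k L] (n : ℕ) : Prop :=
  ∃ f : Fin n → L, AlgebraicIndependent k f

/-- The transcendence degree of `L` over `k` is at most `n`: there is no algebraically
independent family of `n + 1` elements. -/
def TrdegLE (k L : Type*) [CommRing k] [CommRing L] [Algebra k L] (n : ℕ) : Prop :=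
  ∀ f : Fin (n + 1) → L, ¬ AlgebraicIndependent k f

/-!
The difference of two solutions linearizes the Riccati equation: `z = (σ₁ - σ₂)⁻¹` satisfies
`z′ = 1 - 2 σ₁ z`. If `z` were algebraic over `k(σ₁)`, the mean of its conjugates would be a
solution `p(σ₁) / q(σ₁)` in `k(σ₁)`. Its denominator `q` is then a Darboux polynomial of the
derivation extending `d/dt` by `X′ = X² - t`, i.e. `q` divides its own derivative, and the
minimal polynomial of `σ₁` would be one as well if `σ₁` were algebraic over `k`. So it suffices
that all Darboux polynomials are constant, for a comparison of leading coefficients shows that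
the linear equation has no polynomial solution.

By Gauss's lemma one may take the coefficients of a Darboux polynomial in `ℚ[t]`. Read from the
top, they satisfy a three-term recurrence. After `t ↦ -t` and a suitable choice of signs, all its
terms are nonnegative for large `t`. When the degree is positive, this contradicts the vanishing
of the coefficient of `X⁻¹`.
-/

namespace IsRingDeriv

/-- The `Differential` structure given by an `IsRingDeriv` map on a commutative ring. -/
abbrev toDifferential {A : Type*} [CommRing A] {d : A → A} (hd : IsRingDeriv d) :
    Differential A where
  deriv := .mk' (AddMonoidHom.mk' d hd.map_add).toIntLinearMap fun x y ↦ by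
    simp only [AddMonoidHom.coe_toIntLinearMap, AddMonoidHom.mk'_apply, hd.leibniz, smul_eq_mul]
    ring

theorem map_ratCast {A : Type*} [Field A] [CharZero A] {d : A → A} (hd : IsRingDeriv d) (q : ℚ) :
    d q = 0 := by
  have h := map_rat_smul hd.toDifferential.deriv q (1 : A)
  rwa [Derivation.map_one_eq_zero, smul_zero, Rat.smul_one_eq_cast] at h

end IsRingDeriv

namespace Riccati

open Polynomial Differential
open scoped IntermediateField

section LeadingCoeff

variable {K : Type*} [CommRing K] [LinearOrder K] [IsStrictOrderedRing K] {p q : K[X]}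

theorem leadingCoeff_add_pos (hp : 0 < p.leadingCoeff) (hq : 0 ≤ q.leadingCoeff) :
    0 < (p + q).leadingCoeff := by
  rcases lt_trichotomy p.degree q.degree with h | h | h
  · rw [leadingCoeff_add_of_degree_lt h]
    exact hq.lt_of_ne' (leadingCoeff_ne_zero.2 (ne_zero_of_degree_gt h))
  · rw [leadingCoeff_add_of_degree_eq h (add_pos_of_pos_of_nonneg hp hq).ne']
    exact add_pos_of_pos_of_nonneg hp hq
  · rwa [leadingCoeff_add_of_degree_lt' h]

theorem leadingCoeff_add_nonneg (hp : 0 ≤ p.leadingCoeff) (hq : 0 ≤ q.leadingCoeff) :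
    0 ≤ (p + q).leadingCoeff := by
  rcases hp.eq_or_lt' with hp0 | hp0
  · rwa [leadingCoeff_eq_zero.1 hp0, zero_add]
  · exact (leadingCoeff_add_pos hp0 hq).le

theorem natDegree_le_natDegree_add_of_leadingCoeff (hp : 0 < p.leadingCoeff)
    (hq : 0 ≤ q.leadingCoeff) : p.natDegree ≤ (p + q).natDegree := by
  refine natDegree_le_natDegree ?_
  rw [degree_add_eq_of_leadingCoeff_add_ne_zero (add_pos_of_pos_of_nonneg hp hq).ne']
  exact le_max_left _ _

theorem leadingCoeff_natCast_mul (m : ℕ) (p : K[X]) :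
    ((m : K[X]) * p).leadingCoeff = m * p.leadingCoeff := by
  rw [leadingCoeff_mul, ← C_eq_natCast, leadingCoeff_C]

theorem leadingCoeff_natCast_mul_X_mul (m : ℕ) (p : K[X]) :
    ((m : K[X]) * (X * p)).leadingCoeff = m * p.leadingCoeff := by
  rw [leadingCoeff_natCast_mul, leadingCoeff_mul, leadingCoeff_X, one_mul]

/-- An operator on polynomials over an ordered ring which preserves eventual nonnegativity,
and maps eventually positive nonconstant polynomials to eventually positive ones. -/
structure IsEventuallyPositive (A : K[X] → K[X]) : Prop where
  nonneg : ∀ p : K[X], 0 ≤ p.leadingCoeff → 0 ≤ (A p).leadingCoeff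
  pos : ∀ p : K[X], 0 < p.natDegree → 0 < p.leadingCoeff → 0 < (A p).leadingCoeff

theorem isEventuallyPositive_derivative_add_mul {c : K[X]} (hc : 0 ≤ c.leadingCoeff) :
    IsEventuallyPositive fun p ↦ derivative p + c * p where
  nonneg p hp := leadingCoeff_add_nonneg
    (by rw [leadingCoeff_derivative]; positivity) (by rw [leadingCoeff_mul]; positivity)
  pos p hdeg hp := leadingCoeff_add_pos
    (by rw [leadingCoeff_derivative]; positivity) (by rw [leadingCoeff_mul]; positivity)

theorem isEventuallyPositive_mul_sub_derivative {c : K[X]} (hc : 0 < c.leadingCoeff) :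
    IsEventuallyPositive fun p ↦ c * p - derivative p := by
  have hlead {p : K[X]} (hp : p ≠ 0) :
      (c * p - derivative p).leadingCoeff = c.leadingCoeff * p.leadingCoeff := by
    have hlt : (derivative p).degree < (c * p).degree :=
      (degree_derivative_lt hp).trans_le
        (mul_comm c p ▸ degree_le_mul_left p (leadingCoeff_ne_zero.1 hc.ne'))
    rw [leadingCoeff_sub_of_degree_lt hlt, leadingCoeff_mul]
  refine ⟨fun p hp ↦ ?_, fun p hdeg hp ↦ ?_⟩
  · rcases eq_or_ne p 0 with rfl | hp0
    · simp
    · rw [hlead hp0]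
      positivity
  · rw [hlead (ne_zero_of_natDegree_gt hdeg)]
    positivity

section Recurrence

variable {n : ℕ} {A : K[X] → K[X]} {r : ℕ → K[X]}

theorem leadingCoeff_nonneg_of_recurrence (hA : IsEventuallyPositive A)
    (h0 : r 0 = 0) (h1 : 0 ≤ (r 1).leadingCoeff)
    (hr : ∀ j ≤ n, ((j + 1 : ℕ) : K[X]) * r (j + 2) =
      A (r (j + 1)) + ((n + 1 - j : ℕ) : K[X]) * (X * r j)) :
    ∀ j ≤ n + 1, 0 ≤ (r j).leadingCoeff ∧ 0 ≤ (r (j + 1)).leadingCoeff := by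
  intro j hj
  induction j with
  | zero => exact ⟨by simp [h0], h1⟩
  | succ j ih =>
    obtain ⟨hj0, hj1⟩ := ih (by omega)
    refine ⟨hj1, nonneg_of_mul_nonneg_right (a := ((j + 1 : ℕ) : K)) ?_ (by positivity)⟩
    rw [← leadingCoeff_natCast_mul, hr j (by omega)]
    refine leadingCoeff_add_nonneg (hA.nonneg _ hj1) ?_
    rw [leadingCoeff_natCast_mul_X_mul]
    positivity

theorem leadingCoeff_pos_and_natDegree_pos_of_natCast_mul_eq {a b c : K[X]} {m l : ℕ}
    (hl : l ≠ 0) (ha : 0 < a.leadingCoeff) (hb : 0 ≤ b.leadingCoeff)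
    (h : (m : K[X]) * c = b + (l : K[X]) * (X * a)) :
    0 < c.leadingCoeff ∧ 0 < c.natDegree := by
  have hXa : 0 < ((l : K[X]) * (X * a)).leadingCoeff := by
    rw [leadingCoeff_natCast_mul_X_mul]
    positivity
  have hdeg_Xa : 0 < ((l : K[X]) * (X * a)).natDegree := by
    rw [← C_eq_natCast, natDegree_C_mul (Nat.cast_ne_zero.2 hl),
      natDegree_X_mul (leadingCoeff_ne_zero.1 ha.ne')]
    exact Nat.succ_pos _
  rw [add_comm] at h
  have hpos := leadingCoeff_add_pos hXa hb
  have hdeg := hdeg_Xa.trans_le (natDegree_le_natDegree_add_of_leadingCoeff hXa hb)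
  rw [← h] at hpos hdeg
  rw [leadingCoeff_natCast_mul] at hpos
  rw [← C_eq_natCast] at hdeg
  exact ⟨pos_of_mul_pos_right hpos m.cast_nonneg, hdeg.trans_le (natDegree_C_mul_le _ _)⟩

theorem leadingCoeff_pos_of_recurrence (hA : IsEventuallyPositive A)
    (h0 : r 0 = 0) (h1 : 0 < (r 1).leadingCoeff)
    (hr : ∀ j ≤ n, ((j + 1 : ℕ) : K[X]) * r (j + 2) =
      A (r (j + 1)) + ((n + 1 - j : ℕ) : K[X]) * (X * r j)) (hn : n ≠ 0) :
    0 < (r (n + 2)).leadingCoeff := by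
  have hnonneg := leadingCoeff_nonneg_of_recurrence hA h0 h1.le hr
  have step (j : ℕ) (hj : j ≤ n) (hpos : 0 < (r j).leadingCoeff) :
      0 < (r (j + 2)).leadingCoeff ∧ 0 < (r (j + 2)).natDegree :=
    leadingCoeff_pos_and_natDegree_pos_of_natCast_mul_eq (by omega) hpos
      (hA.nonneg _ (hnonneg j (by omega)).2) (hr j hj)
  suffices ∀ j < n, 0 < (r (j + 3)).leadingCoeff by
    obtain ⟨m, rfl⟩ := Nat.exists_eq_succ_of_ne_zero hn
    exact this m m.lt_succ_self
  intro j
  induction j using Nat.strong_induction_on with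
  | _ j ih =>
    intro hj
    match j with
    | 0 => exact (step 1 (by omega) h1).1
    | 1 =>
      -- The term `X * r 2` may vanish here; positivity comes from `A (r 3)`, as `r 3` has
      -- positive degree.
      have h3 := step 1 (by omega) h1
      refine pos_of_mul_pos_right (a := ((2 + 1 : ℕ) : K)) ?_ (Nat.cast_nonneg _)
      rw [← leadingCoeff_natCast_mul, hr 2 (by omega)]
      refine leadingCoeff_add_pos (hA.pos _ h3.2 h3.1) ?_
      rw [leadingCoeff_natCast_mul_X_mul]
      exact mul_nonneg (Nat.cast_nonneg _) (hnonneg 2 (by omega)).1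
    | i + 2 => exact (step (i + 3) (by omega) (ih i (by omega) (by omega))).1

theorem ne_zero_of_recurrence {c : K[X]} (h0 : r 0 = 0) (h1 : r 1 ≠ 0)
    (hr : ∀ j ≤ n, ((j + 1 : ℕ) : K[X]) * r (j + 2) =
      -(derivative (r (j + 1)) + c * r (j + 1)) + ((n + 1 - j : ℕ) : K[X]) * (X * r j))
    (hn : n ≠ 0) : r (n + 2) ≠ 0 := by
  wlog hpos : 0 < (r 1).leadingCoeff generalizing r
  · refine neg_ne_zero.1 (this (r := -r) (by simp [h0]) (by simpa) (fun j hj ↦ ?_) ?_)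
    · simp only [Pi.neg_apply, derivative_neg]
      linear_combination -hr j hj
    · rw [Pi.neg_apply, leadingCoeff_neg, neg_pos]
      exact (not_lt.1 hpos).lt_of_ne (leadingCoeff_ne_zero.2 h1)
  rcases le_or_gt 0 c.leadingCoeff with hc | hc
  · have h := leadingCoeff_pos_of_recurrence (r := fun j ↦ (-1) ^ (j + 1) * r j)
      (isEventuallyPositive_derivative_add_mul hc) (by simp [h0]) (by simpa using hpos)
      (fun j hj ↦ ?_) hn
    · exact right_ne_zero_of_mul (leadingCoeff_ne_zero.1 h.ne')
    · have hd : derivative ((-1) ^ (j + 1 + 1) * r (j + 1)) =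
          (-1) ^ (j + 1 + 1) * derivative (r (j + 1)) := by
        rcases neg_one_pow_eq_or K[X] (j + 1 + 1) with h | h <;> simp [h]
      rw [hd]
      linear_combination (-1) ^ (j + 1) * hr j hj
  · have hc' : 0 < (-c).leadingCoeff := by rwa [leadingCoeff_neg, neg_pos]
    have h := leadingCoeff_pos_of_recurrence (isEventuallyPositive_mul_sub_derivative hc')
      h0 hpos (fun j hj ↦ ?_) hn
    · exact leadingCoeff_ne_zero.1 h.ne'
    · linear_combination hr j hj

end Recurrence

end LeadingCoeff

section Riccati

variable {A : Type*} [CommRing A] [Differential A]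

/-- The derivation of `A[X]` extending the one of `A` with `X′ = X² - t`: it computes the
derivative of a polynomial expression in a solution `y` of the Riccati equation `y′ = y² - t`. -/
noncomputable def riccatiDeriv (t : A) : Derivation ℤ A[X] A[X] :=
  implicitDeriv (X ^ 2 - C t)

theorem coeff_riccatiDeriv (t : A) (p : A[X]) (i : ℕ) :
    (riccatiDeriv t p).coeff i =
      (p.coeff i)′ + ((i : A) - 1) * (X * p).coeff i - t * (i + 1) * p.coeff (i + 1) := by
  have hsq : (X ^ 2 * derivative p).coeff i = ((i : A) - 1) * (X * p).coeff i := by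
    rw [sq, mul_assoc]
    rcases i with _ | _ | i <;> simp [coeff_derivative, mul_comm]
  rw [riccatiDeriv, implicitDeriv, Derivation.add_apply, coeff_add, coeff_mapCoeffs,
    Derivation.smul_apply, Derivation.restrictScalars_apply, derivative'_apply, smul_eq_mul,
    sub_mul, coeff_sub, hsq, coeff_C_mul, coeff_derivative]
  ring

theorem natDegree_riccatiDeriv_le (t : A) (p : A[X]) :
    (riccatiDeriv t p).natDegree ≤ p.natDegree + 1 := by
  refine natDegree_le_iff_coeff_eq_zero.2 fun i hi ↦ ?_
  obtain ⟨j, rfl⟩ := Nat.exists_eq_succ_of_ne_zero (Nat.ne_zero_of_lt hi)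
  rw [coeff_riccatiDeriv, Nat.succ_eq_add_one, coeff_X_mul,
    coeff_eq_zero_of_natDegree_lt (by omega), coeff_eq_zero_of_natDegree_lt (n := j) (by omega),
    coeff_eq_zero_of_natDegree_lt (n := j + 1 + 1) (by omega)]
  simp

theorem coeff_natDegree_add_one_riccatiDeriv (t : A) (p : A[X]) :
    (riccatiDeriv t p).coeff (p.natDegree + 1) = p.natDegree * p.leadingCoeff := by
  rw [coeff_riccatiDeriv, coeff_X_mul,
    coeff_eq_zero_of_natDegree_lt (n := p.natDegree + 1) (by simp),
    coeff_eq_zero_of_natDegree_lt (n := p.natDegree + 1 + 1) (by omega)]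
  simp

theorem deriv_aeval_eq_aeval_riccatiDeriv {B : Type*} [CommRing B] [Differential B] [Algebra A B]
    [DifferentialAlgebra A B] {t : A} {σ : B} (hσ : σ′ = σ ^ 2 - algebraMap A B t) (p : A[X]) :
    (aeval σ p)′ = aeval σ (riccatiDeriv t p) :=
  deriv_aeval_eq_implicitDeriv σ _ (by simpa using hσ) p

theorem exists_recurrence_of_dvd_riccatiDeriv [IsDomain A] {t : A} {p : A[X]}
    (h : p ∣ riccatiDeriv t p) :
    ∃ e : A, ∀ i ≤ p.natDegree, ((p.natDegree + 1 - i : ℕ) : A) * (X * p).coeff i =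
      (p.coeff i)′ - e * p.coeff i - t * (i + 1) * p.coeff (i + 1) := by
  rcases eq_or_ne p 0 with rfl | hp
  · exact ⟨0, by simp⟩
  obtain ⟨q, hq⟩ := h
  have hqdeg : q.natDegree ≤ 1 := by
    rcases eq_or_ne q 0 with rfl | hq0
    · simp
    · have := natDegree_riccatiDeriv_le t p
      rw [hq, natDegree_mul hp hq0] at this
      omega
  rw [eq_X_add_C_of_natDegree_le_one hqdeg] at hq
  have hcoeff (i : ℕ) : (riccatiDeriv t p).coeff i =
      q.coeff 1 * (X * p).coeff i + q.coeff 0 * p.coeff i := by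
    rw [hq, mul_comm, add_mul, mul_assoc, coeff_add, coeff_C_mul, coeff_C_mul]
  have htop : q.coeff 1 = p.natDegree := by
    have := hcoeff (p.natDegree + 1)
    rw [coeff_natDegree_add_one_riccatiDeriv, coeff_X_mul,
      coeff_eq_zero_of_natDegree_lt p.natDegree.lt_succ_self, mul_zero, add_zero] at this
    exact (mul_right_cancel₀ (leadingCoeff_ne_zero.2 hp) this).symm
  refine ⟨q.coeff 0, fun i hi ↦ ?_⟩
  have := hcoeff i
  rw [coeff_riccatiDeriv, htop] at this
  rw [Nat.cast_sub (by omega)]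
  push_cast
  linear_combination -this

theorem riccatiDeriv_ne_one_sub_two_mul_X_mul [IsDomain A] [CharZero A] (t : A) (b : A[X]) :
    riccatiDeriv t b ≠ 1 - 2 * X * b := by
  intro h
  have hcoeff := congr_arg (fun p ↦ p.coeff (b.natDegree + 1)) h
  rw [coeff_natDegree_add_one_riccatiDeriv, mul_assoc, coeff_sub, ← C_ofNat, coeff_C_mul,
    coeff_X_mul, coeff_one, if_neg (Nat.succ_ne_zero _), coeff_natDegree] at hcoeff
  have hlead : ((b.natDegree + 2 : ℕ) : A) * b.leadingCoeff = 0 := by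
    push_cast
    linear_combination hcoeff
  have hb : b = 0 :=
    leadingCoeff_eq_zero.1 ((mul_eq_zero.1 hlead).resolve_left (Nat.cast_ne_zero.2 (by omega)))
  simp [hb] at h

theorem deriv_inv_sub {M : Type*} [Field M] [Differential M] {σ τ t : M}
    (hσ : σ′ = σ ^ 2 - t) (hτ : τ′ = τ ^ 2 - t) (hne : σ ≠ τ) :
    ((σ - τ)⁻¹)′ = 1 - 2 * σ * (σ - τ)⁻¹ := by
  have hsub := sub_ne_zero.2 hne
  rw [Derivation.leibniz_inv, map_sub, hσ, hτ, smul_eq_mul]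
  field_simp
  ring

end Riccati

section Airy

variable {K : Type*} [CommRing K]

/-- `K[X]` as a differential ring with derivation `d/dX`. -/
@[reducible] noncomputable def differentialPolynomial (K : Type*) [CommRing K] :
    Differential K[X] :=
  ⟨derivative'.restrictScalars ℤ⟩

attribute [local instance] differentialPolynomial

theorem natDegree_eq_zero_of_dvd_riccatiDeriv_X [LinearOrder K] [IsStrictOrderedRing K]
    {p : K[X][X]} (h : p ∣ riccatiDeriv X p) : p.natDegree = 0 := by
  obtain ⟨e, he⟩ := exists_recurrence_of_dvd_riccatiDeriv h
  by_contra hn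
  set n := p.natDegree
  -- Substituting `-X` for the base variable makes the last term of the recurrence positive.
  refine ne_zero_of_recurrence (r := fun j ↦ ((X * p).coeff (n + 2 - j)).comp (-X))
    (c := e.comp (-X)) ?_ ?_ (fun j hj ↦ ?_) hn (by simp)
  · rw [Nat.sub_zero, coeff_X_mul, coeff_eq_zero_of_natDegree_lt (by omega), zero_comp]
  · rw [show n + 2 - 1 = n + 1 by omega, coeff_X_mul, Ne, comp_neg_X_eq_zero_iff]
    exact leadingCoeff_ne_zero.2 (ne_zero_of_natDegree_gt (Nat.pos_of_ne_zero hn))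
  · have hrec := congr_arg (fun q ↦ q.comp (-X)) (he (n - j) (Nat.sub_le n j))
    have hderiv : (p.coeff (n - j))′ = derivative (p.coeff (n - j)) := rfl
    rw [show n + 1 - (n - j) = j + 1 by omega, hderiv] at hrec
    rw [show n + 2 - (j + 2) = n - j by omega, show n + 2 - (j + 1) = n - j + 1 by omega,
      show n + 2 - j = n - j + 1 + 1 by omega, show n + 1 - j = n - j + 1 by omega,
      coeff_X_mul, coeff_X_mul, derivative_comp, derivative_neg, derivative_X]
    simp only [mul_comp, sub_comp, add_comp, natCast_comp, one_comp, X_comp] at hrec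
    push_cast at hrec ⊢
    linear_combination hrec

end Airy

theorem map_implicitDeriv {R k : Type*} [CommRing R] [CommRing k] [Algebra R k]
    [Differential R] [Differential k] [DifferentialAlgebra R k] (v p : R[X]) :
    (implicitDeriv v p).map (algebraMap R k) =
      implicitDeriv (v.map (algebraMap R k)) (p.map (algebraMap R k)) := by
  have hcoeffs : (mapCoeffs p).map (algebraMap R k) = mapCoeffs (p.map (algebraMap R k)) := by
    ext i
    rw [coeff_map, coeff_mapCoeffs, coeff_mapCoeffs, coeff_map, deriv_algebraMap]
  simp only [implicitDeriv, Derivation.add_apply, Derivation.smul_apply,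
    Derivation.restrictScalars_apply, derivative'_apply, smul_eq_mul, Polynomial.map_add,
    Polynomial.map_mul, hcoeffs, derivative_map]

section Gauss

variable {R k : Type*} [CommRing R] [Field k] [Algebra R k] [IsFractionRing R k]

theorem exists_isPrimitive_eq_C_mul_map [IsGCDMonoid R] {p : k[X]} (hp : p ≠ 0) :
    ∃ P : R[X], P.IsPrimitive ∧ ∃ u : k, u ≠ 0 ∧ p = C u * P.map (algebraMap R k) := by
  have : IsDomain R := (IsFractionRing.injective R k).isDomain
  let : NormalizedGCDMonoid R := Classical.arbitrary _
  obtain ⟨b, hb, hmap⟩ := IsLocalization.integerNormalization_spec (nonZeroDivisors R) p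
  set q := IsLocalization.integerNormalization (nonZeroDivisors R) p
  have hb0 : algebraMap R k b ≠ 0 := IsFractionRing.to_map_ne_zero_of_mem_nonZeroDivisors hb
  have hq : p = C (algebraMap R k q.content / algebraMap R k b) *
      q.primPart.map (algebraMap R k) := by
    have hmul : C (algebraMap R k b) * p =
        C (algebraMap R k q.content) * q.primPart.map (algebraMap R k) := by
      rw [← map_C (f := algebraMap R k) (a := q.content), ← Polynomial.map_mul,
        ← q.eq_C_content_mul_primPart, hmap, ← smul_eq_C_mul, algebraMap_smul]
    rw [div_eq_inv_mul, C_mul, mul_assoc, ← hmul, ← mul_assoc, ← C_mul, inv_mul_cancel₀ hb0,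
      C_1, one_mul]
  refine ⟨q.primPart, q.isPrimitive_primPart, _, fun hu ↦ hp ?_, hq⟩
  rw [hq, hu, C_0, zero_mul]

theorem exists_natDegree_eq_and_dvd_implicitDeriv [IsGCDMonoid R] [Differential R]
    [Differential k] [DifferentialAlgebra R k] {v : R[X]} {p : k[X]}
    (h : p ∣ implicitDeriv (v.map (algebraMap R k)) p) :
    ∃ P : R[X], P.natDegree = p.natDegree ∧ P ∣ implicitDeriv v P := by
  rcases eq_or_ne p 0 with rfl | hp
  · exact ⟨0, by simp⟩
  have : IsDomain R := (IsFractionRing.injective R k).isDomain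
  let : NormalizedGCDMonoid R := Classical.arbitrary _
  obtain ⟨P, hP, u, hu, rfl⟩ := exists_isPrimitive_eq_C_mul_map (R := R) hp
  refine ⟨P, ?_, hP.dvd_of_fraction_map_dvd_fraction_map (K := k) ?_⟩
  · rw [natDegree_C_mul hu, natDegree_map_eq_of_injective (IsFractionRing.injective R k)]
  · have hPdvd := (dvd_mul_left _ _).trans h
    rw [Derivation.leibniz, implicitDeriv_C, smul_eq_mul, smul_eq_mul,
      dvd_add_left (dvd_mul_right _ _), (isUnit_C.2 hu.isUnit).dvd_mul_left] at hPdvd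
    rwa [map_implicitDeriv]

end Gauss

section Descent

variable {F M : Type*} [Field F] [Differential F] [Field M] [Algebra F M]
  [Differential M] [DifferentialAlgebra F M]

theorem coeff_implicitDeriv_C_mul_X_add_C {A : Type*} [CommRing A] [Differential A]
    (α β : A) (p : A[X]) (i : ℕ) :
    (implicitDeriv (C α * X + C β) p).coeff i =
      (p.coeff i)′ + α * i * p.coeff i + β * (i + 1) * p.coeff (i + 1) := by
  have hX : (X * derivative p).coeff i = i * p.coeff i := by
    rcases i with _ | i <;> simp [coeff_derivative, mul_comm]
  rw [implicitDeriv, Derivation.add_apply, coeff_add, coeff_mapCoeffs,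
    Derivation.smul_apply, Derivation.restrictScalars_apply, derivative'_apply, smul_eq_mul,
    add_mul, mul_assoc, coeff_add, coeff_C_mul, coeff_C_mul, hX, coeff_derivative]
  ring

theorem implicitDeriv_minpoly_of_deriv_eq_mul_add {α β : F} {z : M} (hz : IsAlgebraic F z)
    (h : z′ = algebraMap F M α * z + algebraMap F M β) :
    implicitDeriv (C α * X + C β) (minpoly F z) =
      C ((minpoly F z).natDegree * α) * minpoly F z := by
  set P := minpoly F z
  have hlead : P.coeff P.natDegree = 1 := minpoly.monic hz.isIntegral
  have hroot : aeval z (implicitDeriv (C α * X + C β) P - C (P.natDegree * α) * P) = 0 := by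
    rw [map_sub, map_mul, minpoly.aeval, mul_zero, sub_zero,
      ← deriv_aeval_eq_implicitDeriv z _ (by simpa using h), minpoly.aeval, map_zero]
  by_contra hne
  refine (minpoly.degree_le_of_ne_zero F z (sub_ne_zero.2 hne) hroot).not_gt ?_
  rw [degree_eq_natDegree (minpoly.ne_zero hz.isIntegral), degree_lt_iff_coeff_zero]
  intro i hi
  rw [coeff_sub, coeff_implicitDeriv_C_mul_X_add_C, coeff_C_mul,
    coeff_eq_zero_of_natDegree_lt (n := i + 1) (Nat.lt_succ_of_le hi)]
  rcases hi.eq_or_lt with rfl | hlt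
  · rw [hlead, Derivation.map_one_eq_zero]
    ring
  · rw [coeff_eq_zero_of_natDegree_lt hlt, map_zero]
    ring

-- A solution is the mean of the conjugates of `z`, read off from the second highest coefficient
-- of the minimal polynomial.
theorem exists_deriv_eq_mul_add_of_isAlgebraic [CharZero F] {α β : F} {z : M}
    (hz : IsAlgebraic F z) (h : z′ = algebraMap F M α * z + algebraMap F M β) :
    ∃ y : F, y′ = α * y + β := by
  set P := minpoly F z
  obtain ⟨m, hm⟩ : ∃ m, P.natDegree = m + 1 :=
    Nat.exists_eq_succ_of_ne_zero (minpoly.natDegree_pos hz.isIntegral).ne'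
  have hlead : P.coeff (m + 1) = 1 := hm ▸ minpoly.monic hz.isIntegral
  have hcoeff := congr_arg (fun p ↦ p.coeff m) (implicitDeriv_minpoly_of_deriv_eq_mul_add hz h)
  rw [coeff_implicitDeriv_C_mul_X_add_C, coeff_C_mul, hlead, hm] at hcoeff
  push_cast at hcoeff
  have hm0 : (m : F) + 1 ≠ 0 := m.cast_add_one_ne_zero
  refine ⟨-P.coeff m / (m + 1), ?_⟩
  rw [Derivation.leibniz_div_const _ _ _ (by simp), map_neg, smul_eq_mul]
  field_simp
  linear_combination -hcoeff

end Descent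

section SimpleExtension

theorem dvd_of_isCoprime_of_mul_sub_mul_eq_mul {A : Type*} [CommRing A] {p q a b c : A}
    (hpq : IsCoprime p q) (h : q * b - p * c = a * q) : q ∣ c :=
  hpq.symm.dvd_of_dvd_mul_left ⟨b - a, by linear_combination -h⟩

variable {k M : Type*} [Field k] [Field M] [Algebra k M]

theorem exists_isCoprime_aeval_div_of_mem_adjoin_simple {σ y : M} (hy : y ∈ k⟮σ⟯) :
    ∃ p q : k[X], IsCoprime p q ∧ aeval σ q ≠ 0 ∧ y = aeval σ p / aeval σ q := by
  obtain ⟨r, s, rfl⟩ := (IntermediateField.mem_adjoin_simple_iff k y).1 hy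
  by_cases hs : aeval σ s = 0
  · exact ⟨0, 1, isCoprime_one_right, by simp, by simp [hs]⟩
  let : NormalizedGCDMonoid k[X] := Classical.arbitrary _
  obtain ⟨p, q, hp, hq, hunit⟩ := extract_gcd r s
  have hrp := congr_arg (aeval σ) hp
  have hsq := congr_arg (aeval σ) hq
  rw [map_mul] at hrp hsq
  rw [hsq] at hs
  refine ⟨p, q, (gcd_isUnit_iff p q).1 hunit, right_ne_zero_of_mul hs, ?_⟩
  rw [hrp, hsq, mul_div_mul_left _ _ (left_ne_zero_of_mul hs)]

variable [Differential k] [Differential M] [DifferentialAlgebra k M]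

theorem deriv_mem_adjoin {S : Set M} (hS : ∀ s ∈ S, s′ ∈ IntermediateField.adjoin k S) {x : M}
    (hx : x ∈ IntermediateField.adjoin k S) : x′ ∈ IntermediateField.adjoin k S := by
  induction hx using IntermediateField.adjoin_induction with
  | mem s hs => exact hS s hs
  | algebraMap a => exact deriv_algebraMap (A := k) (B := M) a ▸ algebraMap_mem _ _
  | add x y _ _ hx hy => exact map_add (Differential.deriv (R := M)) x y ▸ add_mem hx hy
  | inv x hxS hx =>
    rw [Derivation.leibniz_inv]
    exact mul_mem (neg_mem (pow_mem (inv_mem hxS) 2)) hx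
  | mul x y hxS hyS hx hy =>
    rw [Derivation.leibniz]
    exact add_mem (mul_mem hxS hy) (mul_mem hyS hx)

/-- An intermediate field closed under the derivation, as a differential field. -/
@[reducible] noncomputable def differentialOfDerivMem (F : IntermediateField k M)
    (hF : ∀ x ∈ F, x′ ∈ F) : Differential F where
  deriv := .mk'
    ((Differential.deriv.toLinearMap.comp F.toSubring.subtype.toIntAlgHom.toLinearMap).codRestrict
      (AddSubgroup.toIntSubmodule F.toSubring.toAddSubgroup) fun x ↦ hF x x.2)
    fun x y ↦ Subtype.ext (Derivation.leibniz _ (x : M) (y : M))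

end SimpleExtension

section DarbouxFree

variable {k M : Type*} [Field k] [Differential k] [Field M] [Algebra k M] [Differential M]
  [DifferentialAlgebra k M] {t : k} {σ τ : M}

/-- The Riccati equation `y′ = y² - t` has no invariant algebraic curve: every Darboux polynomial
of the derivation `riccatiDeriv t`, i.e. every polynomial dividing its derivative, is constant. -/
def IsDarbouxFree (t : k) : Prop :=
  ∀ p : k[X], p ∣ riccatiDeriv t p → p.natDegree = 0

theorem IsDarbouxFree.transcendental (ht : IsDarbouxFree t)
    (hσ : σ′ = σ ^ 2 - algebraMap k M t) : Transcendental k σ := by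
  intro halg
  refine (minpoly.natDegree_pos halg.isIntegral).ne' (ht _ (minpoly.dvd k σ ?_))
  rw [← deriv_aeval_eq_aeval_riccatiDeriv hσ, minpoly.aeval, map_zero]

theorem IsDarbouxFree.deriv_ne_of_mem_adjoin_simple [CharZero k] (ht : IsDarbouxFree t)
    (hσ : σ′ = σ ^ 2 - algebraMap k M t) {y : M} (hy : y ∈ k⟮σ⟯) : y′ ≠ 1 - 2 * σ * y := by
  obtain ⟨p, q, hpq, hq0, rfl⟩ := exists_isCoprime_aeval_div_of_mem_adjoin_simple hy
  intro h
  have hinj := transcendental_iff_injective.1 (ht.transcendental hσ)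
  have hquot : q * riccatiDeriv t p - p * riccatiDeriv t q = (q - 2 * X * p) * q := by
    apply hinj
    rw [Derivation.leibniz_div, deriv_aeval_eq_aeval_riccatiDeriv hσ,
      deriv_aeval_eq_aeval_riccatiDeriv hσ] at h
    simp only [map_sub, map_mul, aeval_X, map_ofNat]
    simp only [smul_eq_mul] at h
    field_simp at h
    linear_combination h
  obtain ⟨u, rfl⟩ : ∃ u, q = C u :=
    ⟨_, eq_C_of_natDegree_eq_zero (ht q (dvd_of_isCoprime_of_mul_sub_mul_eq_mul hpq hquot))⟩
  have hb : aeval σ p / aeval σ (C u) = aeval σ (C u⁻¹ * p) := by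
    rw [aeval_C, map_mul, aeval_C, map_inv₀, div_eq_inv_mul]
  rw [hb, deriv_aeval_eq_aeval_riccatiDeriv hσ] at h
  refine riccatiDeriv_ne_one_sub_two_mul_X_mul t (C u⁻¹ * p) (hinj (h.trans ?_))
  simp only [map_sub, map_mul, map_one, map_ofNat, aeval_X]

theorem IsDarbouxFree.transcendental_adjoin_simple [CharZero k] (ht : IsDarbouxFree t)
    (hσ : σ′ = σ ^ 2 - algebraMap k M t) (hτ : τ′ = τ ^ 2 - algebraMap k M t) (hne : σ ≠ τ) :
    Transcendental k⟮σ⟯ τ := by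
  intro halg
  set g := IntermediateField.AdjoinSimple.gen k σ
  have hclosed (x : M) (hx : x ∈ k⟮σ⟯) : x′ ∈ k⟮σ⟯ := by
    refine deriv_mem_adjoin (fun s hs ↦ ?_) hx
    rw [Set.mem_singleton_iff.1 hs, hσ]
    exact sub_mem (pow_mem (IntermediateField.mem_adjoin_simple_self k σ) 2) (algebraMap_mem _ t)
  let : Differential k⟮σ⟯ := differentialOfDerivMem k⟮σ⟯ hclosed
  have : DifferentialAlgebra k⟮σ⟯ M := ⟨fun _ ↦ rfl⟩
  have hg : algebraMap k⟮σ⟯ M g = σ := IntermediateField.AdjoinSimple.algebraMap_gen k σ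
  have hz : IsAlgebraic k⟮σ⟯ (σ - τ)⁻¹ := ((isAlgebraic_algebraMap g).sub halg).inv
  have hderiv : ((σ - τ)⁻¹)′ =
      algebraMap k⟮σ⟯ M (-2 * g) * (σ - τ)⁻¹ + algebraMap k⟮σ⟯ M 1 := by
    rw [deriv_inv_sub hσ hτ hne, map_mul, hg, map_neg, map_ofNat, map_one]
    ring
  obtain ⟨y, hy⟩ := exists_deriv_eq_mul_add_of_isAlgebraic hz hderiv
  refine ht.deriv_ne_of_mem_adjoin_simple hσ y.2 ?_
  have hyM := congr_arg (algebraMap k⟮σ⟯ M) hy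
  rw [← deriv_algebraMap, map_add, map_mul, map_mul, hg, map_neg, map_ofNat, map_one] at hyM
  refine hyM.trans ?_
  rw [IntermediateField.algebraMap_apply]
  ring

theorem IsDarbouxFree.algebraicIndependent [CharZero k] (ht : IsDarbouxFree t)
    (hσ : σ′ = σ ^ 2 - algebraMap k M t) (hτ : τ′ = τ ^ 2 - algebraMap k M t) (hne : σ ≠ τ) :
    AlgebraicIndependent k ![σ, τ] := by
  refine (AlgebraicIndependent.iff_transcendental_adjoin_image 1).2 ⟨?_, ?_⟩
  · have : Subsingleton {j : Fin 2 // j ≠ 1} := ⟨fun i j ↦ Subtype.ext (by omega)⟩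
    exact (algebraicIndependent_singleton_iff (⟨0, zero_ne_one⟩ : {j : Fin 2 // j ≠ 1})).2
      (ht.transcendental hσ)
  · have himage : ![σ, τ] '' {1}ᶜ = {σ} := by
      ext x
      simp [eq_comm]
    rw [himage]
    exact IntermediateField.transcendental_adjoin_iff.1
      (ht.transcendental_adjoin_simple hσ hτ hne)

end DarbouxFree

section Polynomial

attribute [local instance] differentialPolynomial

theorem isDarbouxFree_algebraMap_X {K k : Type*} [Field K] [LinearOrder K] [IsStrictOrderedRing K]
    [Field k] [Differential k] [Algebra K[X] k] [IsFractionRing K[X] k]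
    [DifferentialAlgebra K[X] k] : IsDarbouxFree (algebraMap K[X] k X) := by
  intro p hp
  have hmap : (X ^ 2 - C X : K[X][X]).map (algebraMap K[X] k) =
      X ^ 2 - C (algebraMap K[X] k X) := by
    rw [Polynomial.map_sub, Polynomial.map_pow, map_X, map_C]
  rw [riccatiDeriv, ← hmap] at hp
  obtain ⟨P, hP, hdvd⟩ := exists_natDegree_eq_and_dvd_implicitDeriv hp
  rw [← hP, natDegree_eq_zero_of_dvd_riccatiDeriv_X hdvd]

theorem differentialAlgebra_polynomial {K k : Type*} [CommRing K] [CommRing k] [Differential k]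
    [Algebra K[X] k] (hC : ∀ a, (algebraMap K[X] k (C a))′ = 0)
    (hX : (algebraMap K[X] k X)′ = 1) : DifferentialAlgebra K[X] k where
  deriv_algebraMap p := by
    change _ = algebraMap K[X] k (derivative p)
    induction p using Polynomial.induction_on' with
    | add p q hp hq => simp only [map_add, hp, hq]
    | monomial n a =>
      rw [← C_mul_X_pow_eq_monomial, map_mul, map_pow, Derivation.leibniz, Derivation.leibniz_pow,
        hC, hX, derivative_C_mul_X_pow]
      simp [mul_assoc]

end Polynomial

end Riccati

theorem stmt_11_general {K : Type*} [Field K] [LinearOrder K] [IsStrictOrderedRing K]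
    (δk : RatFunc K → RatFunc K) (hδk : IsRingDeriv δk) (hC : ∀ a, δk (RatFunc.C a) = 0)
    (hX : δk RatFunc.X = 1)
    (M : Type*) [Field M] [Algebra (RatFunc K) M]
    (δM : M → M) (hδM : IsRingDeriv δM) (hres : RestrictsTo δk δM)
    (σ₁ σ₂ : M) (hne : σ₁ ≠ σ₂)
    (h₁ : δM σ₁ = σ₁ ^ 2 - algebraMap (RatFunc K) M RatFunc.X)
    (h₂ : δM σ₂ = σ₂ ^ 2 - algebraMap (RatFunc K) M RatFunc.X) :
    AlgebraicIndependent (RatFunc K) ![σ₁, σ₂] := by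
  let : Differential (Polynomial K) := Riccati.differentialPolynomial K
  let : Differential (RatFunc K) := hδk.toDifferential
  let : Differential M := hδM.toDifferential
  have : DifferentialAlgebra (RatFunc K) M := ⟨hres⟩
  have : DifferentialAlgebra (Polynomial K) (RatFunc K) :=
    Riccati.differentialAlgebra_polynomial (fun a ↦ RatFunc.algebraMap_C a ▸ hC a)
      (RatFunc.algebraMap_X (K := K) ▸ hX)
  have hfree : Riccati.IsDarbouxFree (RatFunc.X : RatFunc K) :=
    RatFunc.algebraMap_X (K := K) ▸ Riccati.isDarbouxFree_algebraMap_X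
  exact hfree.algebraicIndependent h₁ h₂ hne

/-- Let `k = ℚ(t)` with `t′ = 1`. Every differential field extension
of `k` containing two distinct solutions of `X′ = X² − t` has transcendence degree at
least `2` over `k`. -/
theorem stmt_11
    (δk : RatFunc ℚ → RatFunc ℚ) (hδk : IsRingDeriv δk) (hX : δk RatFunc.X = 1)
    (M : Type*) [Field M] [Algebra (RatFunc ℚ) M]
    (δM : M → M) (hδM : IsRingDeriv δM) (hres : RestrictsTo δk δM)
    (σ₁ σ₂ : M) (hne : σ₁ ≠ σ₂)
    (h₁ : δM σ₁ = σ₁ ^ 2 - algebraMap (RatFunc ℚ) M RatFunc.X)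
    (h₂ : δM σ₂ = σ₂ ^ 2 - algebraMap (RatFunc ℚ) M RatFunc.X) :
    TrdegGE (RatFunc ℚ) M 2 :=
  ⟨![σ₁, σ₂], stmt_11_general δk hδk (fun a ↦ eq_ratCast RatFunc.C a ▸ hδk.map_ratCast a) hX
    M δM hδM hres σ₁ σ₂ hne h₁ h₂⟩
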